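/- arXiv:2503.18920 — 2 statements merged into one kernel-verified Lean document; each statement's English description precedes it below -/
import Mathlib

section
/- Suppose 2 ≤ k ≤ n are integers and f : V(P_n) → {1,...,k} is a k-color weak maximizer of the Wiener index W on P_n. Then W(f) = min{ W(f') : f' a k-color weak maximizer of W on P_n } if and only if the numbers of vertices in any two color classes of f differ by at most one. -/
open SimpleGraph Finset

/-- The cycle graph on vertex set `ZMod n`, with an edge between `i` and `i+1` (mod `n`). -/
def cycleGraphZMod (n : ℕ) : SimpleGraph (ZMod n) :=
  SimpleGraph.fromRel (fun u v => v = u + 1)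

/-- The Wiener index of a set of vertices: the sum of all pairwise geodesic distances. -/
noncomputable def wienerSet {V : Type*} [Fintype V] [DecidableEq V]
    (G : SimpleGraph V) (A : Finset V) : ℕ :=
  (∑ p ∈ A.offDiag, G.dist p.1 p.2) / 2

/-- `A` is a maximizer of `W` on `G`. -/
def IsWienerMaximizer {V : Type*} [Fintype V] [DecidableEq V]
    (G : SimpleGraph V) (A : Finset V) : Prop :=
  ∀ B : Finset V, B.card = A.card → wienerSet G B ≤ wienerSet G A

/-- `A ⊆ V(C_n)` is almost good. -/
def AlmostGood (n : ℕ) (A : Finset (ZMod n)) : Prop :=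
  A.card = 1 ∨ A.card = n - 1 ∨
    ∃ c₁ c₂ : ((cycleGraphZMod n).induce (↑A : Set (ZMod n))).ConnectedComponent,
      c₁ ≠ c₂ ∧ (∀ c, c = c₁ ∨ c = c₂) ∧
      (c₁.supp.ncard : ℤ) - (c₂.supp.ncard : ℤ) ≤ 1 ∧
      (c₂.supp.ncard : ℤ) - (c₁.supp.ncard : ℤ) ≤ 1

/-- `A ⊆ V(C_n)` is good: both `A` and its complement are almost good. -/
def GoodSet (n : ℕ) [NeZero n] (A : Finset (ZMod n)) : Prop :=
  AlmostGood n A ∧ AlmostGood n (Finset.univ \ A)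

/-- The color class of color `i` for the coloring `f`. -/
def colorClass {V : Type*} [Fintype V] {k : ℕ} (f : V → Fin k) (i : Fin k) : Finset V :=
  Finset.univ.filter (fun v => f v = i)

/-- The Wiener index of a coloring: the sum of the Wiener indices of its color classes. -/
noncomputable def wienerColoring {V : Type*} [Fintype V] [DecidableEq V] {k : ℕ}
    (G : SimpleGraph V) (f : V → Fin k) : ℕ :=
  ∑ i : Fin k, wienerSet G (colorClass f i)

/-- The type of a coloring, as the multiset of cardinalities of its color classes
(equality of multisets is equality of the nondecreasing rearrangements). -/
def colorType {V : Type*} [Fintype V] {k : ℕ} (f : V → Fin k) : Multiset ℕ :=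
  (Finset.univ : Finset (Fin k)).val.map (fun i => (colorClass f i).card)

/-- `f` is a `k`-color weak maximizer of `W` on `G`. -/
def IsWeakMaximizer {V : Type*} [Fintype V] [DecidableEq V] {k : ℕ}
    (G : SimpleGraph V) (f : V → Fin k) : Prop :=
  Function.Surjective f ∧ ∀ g : V → Fin k, Function.Surjective g →
    colorType g = colorType f → wienerColoring G g ≤ wienerColoring G f

/-- The coloring obtained from `f` by swapping the colors of `u` and `v`. -/
def swapColors {V α : Type*} [DecidableEq V] (f : V → α) (u v : V) : V → α :=
  f ∘ Equiv.swap u v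

/-- `f` is a `k`-color local weak maximizer of `W` on `G`. -/
def IsLocalWeakMaximizer {V : Type*} [Fintype V] [DecidableEq V] {k : ℕ}
    (G : SimpleGraph V) (f : V → Fin k) : Prop :=
  Function.Surjective f ∧ ∀ u v : V, G.Adj u v →
    wienerColoring G (swapColors f u v) ≤ wienerColoring G f

/-- The number of vertices to the left of `u` in the path that get the same color as `u`. -/
def leftCount {n k : ℕ} (f : Fin n → Fin k) (u : Fin n) : ℕ :=
  (Finset.univ.filter (fun w => w < u ∧ f w = f u)).card

/-- The number of vertices to the right of `u` in the path that get the same color as `u`. -/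
def rightCount {n k : ℕ} (f : Fin n → Fin k) (u : Fin n) : ℕ :=
  (Finset.univ.filter (fun w => u < w ∧ f w = f u)).card

/-- The sum of the `j` largest entries of a multiset of naturals. -/
def sumLargest (s : Multiset ℕ) (j : ℕ) : ℕ :=
  (((s.sort (· ≤ ·)).reverse).take j).sum

/-- `x ≺ y` : `x` is majorized by `y`. -/
def MajorizedBy (x y : Multiset ℕ) : Prop :=
  x.card = y.card ∧ x.sum = y.sum ∧ ∀ j, sumLargest x j ≤ sumLargest y j

/-- The reverse Robin Hood transfer `R_{j,j'}` applied to the (sorted) list `t`,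
with `j ≤ j'` zero-indexed: subtract `1` from the `j`-th entry and add `1` to the `j'`-th
entry; the result is recorded as a multiset (i.e. up to rearrangement). -/
def rhTransfer (t : List ℕ) (j j' : ℕ) : Multiset ℕ :=
  ↑((t.set j (t.getD j 0 - 1)).set j' ((t.set j (t.getD j 0 - 1)).getD j' 0 + 1))

/-- `t(n,k)` : the unique nondecreasing `k`-tuple of positive integers summing to `n`
whose entries pairwise differ by at most one, as a multiset. -/
def equitableType (n k : ℕ) : Multiset ℕ :=
  Multiset.replicate (k - n % k) (n / k) + Multiset.replicate (n % k) (n / k + 1)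

/-- One step of the operation `R`: `s ∈ R({t})`, i.e. `s = t` or `s` is obtained from `t` by
a reverse Robin Hood transfer between two entries that are equal and even. -/
def REstep (t s : Multiset ℕ) : Prop :=
  s = t ∨ ∃ m : ℕ, Even m ∧ 2 ≤ t.count m ∧
    s = (t - Multiset.replicate 2 m) + {m - 1, m + 1}

/-- `s ∈ R^∞({t(n,k)})`. -/
def InRInfty (n k : ℕ) (s : Multiset ℕ) : Prop :=
  Relation.ReflTransGen REstep (equitableType n k) s

/-- The sum of `|x - y|` over `x` in the arithmetic progression `-(a-1), -(a-3), ..., a-1` and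
`y` in the progression `-(b-1), -(b-3), ..., b-1`. -/
def crossSpread (a b : ℕ) : ℤ :=
  ∑ x ∈ range a, ∑ y ∈ range b, |(2 * (x : ℤ) - a + 1) - (2 * (y : ℤ) - b + 1)|

lemma crossSpread_comm (a b : ℕ) : crossSpread a b = crossSpread b a := by
  unfold crossSpread
  rw [sum_comm]
  simp only [abs_sub_comm]

lemma sum_abs_sub_odd_progression (p r : ℕ) (ε : ℤ) (h0 : 0 ≤ ε) (h1 : ε ≤ 1) :
    ∑ y ∈ range (p + r), |2 * (p : ℤ) - 2 * y - 1 - ε| = p ^ 2 + r ^ 2 + ε * (r - p) := by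
  induction r with
  | zero =>
    have key : ∀ m ≤ p, ∑ y ∈ range m, |2 * (p : ℤ) - 2 * y - 1 - ε|
        = 2 * p * m - m ^ 2 - ε * m := by
      intro m
      induction m with
      | zero => simp
      | succ m ih =>
        intro hm
        rw [sum_range_succ, ih (by omega), abs_of_nonneg (by omega)]
        push_cast
        ring
    rw [add_zero, key p le_rfl]
    push_cast
    ring
  | succ r ih =>
    rw [← add_assoc, sum_range_succ, ih, abs_of_nonpos (by push_cast; omega)]
    push_cast
    ring

lemma two_mul_sum_range_id (a : ℕ) : 2 * ∑ t ∈ range a, (t : ℤ) = a * (a - 1) := by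
  induction a with
  | zero => simp
  | succ a ih => rw [sum_range_succ, mul_add, ih]; push_cast; ring

lemma six_mul_sum_range_sq (a : ℕ) :
    6 * ∑ t ∈ range a, (t : ℤ) ^ 2 = a * (a - 1) * (2 * a - 1) := by
  induction a with
  | zero => simp
  | succ a ih => rw [sum_range_succ, mul_add, ih]; push_cast; ring

lemma six_mul_crossSpread_even (a e : ℕ) :
    6 * crossSpread a (a + 2 * e) = 3 * a * (a + 2 * e) ^ 2 + a ^ 3 - a - 3 * a := by
  have inner : ∀ x ∈ range a, ∑ y ∈ range (a + 2 * e),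
      |(2 * (x : ℤ) - a + 1) - (2 * (y : ℤ) - (a + 2 * e : ℕ) + 1)|
      = 2 * (x : ℤ) ^ 2 + (2 - 2 * a) * x + (2 * e ^ 2 + a ^ 2 + 2 * a * e - a) := by
    intro x hx
    rw [mem_range] at hx
    obtain ⟨r, rfl⟩ : ∃ r, a = x + 1 + r := ⟨a - x - 1, by omega⟩
    have h := sum_abs_sub_odd_progression (x + 1 + e) (r + e) 1 (by norm_num) (by norm_num)
    rw [show x + 1 + r + 2 * e = x + 1 + e + (r + e) by ring]
    refine (sum_congr rfl fun y _ => ?_).trans (h.trans ?_)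
    · congr 1; push_cast; ring
    · push_cast; ring
  unfold crossSpread
  rw [sum_congr rfl inner, sum_add_distrib, sum_add_distrib, ← mul_sum, ← mul_sum, sum_const,
    card_range, nsmul_eq_mul]
  linear_combination 2 * six_mul_sum_range_sq a + 3 * (2 - 2 * a) * two_mul_sum_range_id a

lemma six_mul_crossSpread_odd (a e : ℕ) :
    6 * crossSpread a (a + 2 * e + 1) = 3 * a * (a + 2 * e + 1) ^ 2 + a ^ 3 - a := by
  have inner : ∀ x ∈ range a, ∑ y ∈ range (a + 2 * e + 1),
      |(2 * (x : ℤ) - a + 1) - (2 * (y : ℤ) - (a + 2 * e + 1 : ℕ) + 1)|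
      = 2 * (x : ℤ) ^ 2 + (2 - 2 * a) * x + (2 * e ^ 2 + a ^ 2 + 2 * a * e + 2 * e + 1) := by
    intro x hx
    rw [mem_range] at hx
    obtain ⟨r, rfl⟩ : ∃ r, a = x + 1 + r := ⟨a - x - 1, by omega⟩
    have h := sum_abs_sub_odd_progression (x + 1 + e) (r + 1 + e) 0 (by norm_num) (by norm_num)
    rw [show x + 1 + r + 2 * e + 1 = x + 1 + e + (r + 1 + e) by ring]
    refine (sum_congr rfl fun y _ => ?_).trans (h.trans ?_)
    · congr 1; push_cast; ring
    · push_cast; ring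
  unfold crossSpread
  rw [sum_congr rfl inner, sum_add_distrib, sum_add_distrib, ← mul_sum, ← mul_sum, sum_const,
    card_range, nsmul_eq_mul]
  linear_combination 2 * six_mul_sum_range_sq a + 3 * (2 - 2 * a) * two_mul_sum_range_id a

lemma crossSpread_second_difference_nonneg (a c : ℕ) :
    2 * crossSpread (a + 1) c ≤ crossSpread a c + crossSpread (a + 2) c := by
  rcases le_or_gt c a with h | h
  · rw [crossSpread_comm _ c, crossSpread_comm _ c, crossSpread_comm _ c]
    obtain ⟨d, rfl⟩ := Nat.exists_eq_add_of_le h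
    obtain ⟨e, rfl | rfl⟩ := Nat.even_or_odd' d
    · have h1 := six_mul_crossSpread_even c e
      have h2 := six_mul_crossSpread_odd c e
      have h3 := six_mul_crossSpread_even c (e + 1)
      rw [show c + 2 * (e + 1) = c + 2 * e + 2 by ring] at h3
      push_cast at h3
      linarith
    · have h1 := six_mul_crossSpread_odd c e
      have h2 := six_mul_crossSpread_even c (e + 1)
      have h3 := six_mul_crossSpread_odd c (e + 1)
      rw [show c + 2 * (e + 1) = c + (2 * e + 1) + 1 by ring] at h2
      rw [show c + 2 * (e + 1) + 1 = c + (2 * e + 1) + 2 by ring] at h3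
      rw [show c + 2 * e + 1 = c + (2 * e + 1) by ring] at h1
      push_cast at h2 h3
      linarith
  · obtain ⟨d, rfl⟩ := Nat.exists_eq_add_of_lt h
    rcases d with _ | d
    · have h1 := six_mul_crossSpread_odd a 0
      have h2 := six_mul_crossSpread_even (a + 1) 0
      have h3 := six_mul_crossSpread_odd (a + 1) 0
      rw [crossSpread_comm (a + 2)]
      simp only [mul_zero, add_zero] at h1 h2 h3 ⊢
      push_cast at h1 h2 h3
      rw [show a + 1 + 1 = a + 2 by ring] at h3
      linarith
    · obtain ⟨e, rfl | rfl⟩ := Nat.even_or_odd' d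
      · have h1 := six_mul_crossSpread_even a (e + 1)
        have h2 := six_mul_crossSpread_odd (a + 1) e
        have h3 := six_mul_crossSpread_even (a + 2) e
        rw [show a + 2 * (e + 1) = a + (2 * e + 1) + 1 by ring] at h1
        rw [show a + 1 + 2 * e + 1 = a + (2 * e + 1) + 1 by ring] at h2
        rw [show a + 2 + 2 * e = a + (2 * e + 1) + 1 by ring] at h3
        push_cast at h1 h2 h3
        linarith
      · have h1 := six_mul_crossSpread_odd a (e + 1)
        have h2 := six_mul_crossSpread_even (a + 1) (e + 1)
        have h3 := six_mul_crossSpread_odd (a + 2) e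
        rw [show a + 2 * (e + 1) + 1 = a + (2 * e + 1 + 1) + 1 by ring] at h1
        rw [show a + 1 + 2 * (e + 1) = a + (2 * e + 1 + 1) + 1 by ring] at h2
        rw [show a + 2 + 2 * e + 1 = a + (2 * e + 1 + 1) + 1 by ring] at h3
        push_cast at h1 h2 h3
        linarith

/-- Moving two class sizes one step closer to each other does not increase their total spread
against a third class. -/
lemma crossSpread_transfer_le (a d c : ℕ) :
    crossSpread (a + 1) c + crossSpread (a + d + 1) c
      ≤ crossSpread a c + crossSpread (a + d + 2) c := by
  have hmono : Monotone fun m => crossSpread (m + 1) c - crossSpread m c :=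
    monotone_nat_of_le_succ fun m => by
      have := crossSpread_second_difference_nonneg m c
      change crossSpread (m + 1) c - crossSpread m c ≤ crossSpread (m + 2) c - _
      linarith
  have := hmono (show a ≤ a + d + 1 by omega)
  change _ ≤ crossSpread (a + d + 2) c - _ at this
  simp only at this
  linarith

lemma crossSpread_transfer_pair_lt (a d : ℕ) :
    crossSpread (a + 1) (a + 1) + 2 * crossSpread (a + 1) (a + d + 1)
        + crossSpread (a + d + 1) (a + d + 1)
      < crossSpread a a + 2 * crossSpread a (a + d + 2)
        + crossSpread (a + d + 2) (a + d + 2) := by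
  have h1 := six_mul_crossSpread_even a 0
  have h2 := six_mul_crossSpread_even (a + 1) 0
  have h3 := six_mul_crossSpread_even (a + d + 1) 0
  have h4 := six_mul_crossSpread_even (a + d + 2) 0
  simp only [mul_zero, add_zero] at h1 h2 h3 h4
  push_cast at h1 h2 h3 h4
  obtain ⟨e, rfl | rfl⟩ := Nat.even_or_odd' d
  · have h5 := six_mul_crossSpread_even a (e + 1)
    have h6 := six_mul_crossSpread_even (a + 1) e
    rw [show a + 2 * (e + 1) = a + 2 * e + 2 by ring] at h5
    rw [show a + 1 + 2 * e = a + 2 * e + 1 by ring] at h6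
    push_cast at h3 h4 h5 h6
    have : (0 : ℤ) ≤ a * e := by positivity
    nlinarith [this, sq_nonneg (e : ℤ)]
  · have h5 := six_mul_crossSpread_odd a (e + 1)
    have h6 := six_mul_crossSpread_odd (a + 1) e
    rw [show a + 2 * (e + 1) + 1 = a + (2 * e + 1) + 2 by ring] at h5
    rw [show a + 1 + 2 * e + 1 = a + (2 * e + 1) + 1 by ring] at h6
    push_cast at h3 h4 h5 h6
    have : (0 : ℤ) ≤ a * e := by positivity
    nlinarith [this, sq_nonneg (e : ℤ)]

lemma pathGraph_dist {n : ℕ} (u v : Fin n) :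
    ((pathGraph n).dist u v : ℤ) = |(u : ℤ) - v| := by
  have hpre := pathGraph_preconnected n
  have upper : ∀ d : ℕ, ∀ u v : Fin n, (v : ℕ) = u + d → (pathGraph n).dist u v ≤ d := by
    intro d
    induction d with
    | zero =>
      intro u v h
      rw [Fin.ext (show (v : ℕ) = u by omega)]
      simp
    | succ d ih =>
      intro u v h
      have hw : (u : ℕ) + d < n := by omega
      have hconn : (pathGraph n).Connected := { preconnected := hpre, nonempty := ⟨u⟩ }
      have h1 := ih u ⟨u + d, hw⟩ rfl
      have h2 : (pathGraph n).dist ⟨u + d, hw⟩ v = 1 := by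
        rw [dist_eq_one_iff_adj, pathGraph_adj]
        left
        simp only
        omega
      have h3 := hconn.dist_triangle (u := u) (v := ⟨u + d, hw⟩) (w := v)
      omega
  have lower : ∀ {u v : Fin n} (p : (pathGraph n).Walk u v), |(u : ℤ) - v| ≤ p.length := by
    intro u v p
    induction p with
    | nil => simp
    | cons h p ih =>
      rw [pathGraph_adj] at h
      rw [Walk.length_cons]
      push_cast
      rw [abs_le] at ih ⊢
      omega
  obtain ⟨p, hp⟩ := (hpre u v).exists_walk_length_eq_dist
  refine le_antisymm ?_ (hp ▸ lower p)
  rcases le_total (u : ℕ) v with h | h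
  · have := upper (v - u) u v (by omega)
    rw [abs_of_nonpos (by omega)]
    omega
  · have := upper (u - v) v u (by omega)
    rw [SimpleGraph.dist_comm, abs_of_nonneg (by omega)]
    omega

lemma two_mul_wienerSet {V : Type*} [Fintype V] [DecidableEq V] (G : SimpleGraph V)
    (A : Finset V) : 2 * wienerSet G A = ∑ u ∈ A, ∑ v ∈ A, G.dist u v := by
  have hdvd : 2 ∣ ∑ p ∈ A.offDiag, G.dist p.1 p.2 := by
    rw [← ZMod.natCast_eq_zero_iff, Nat.cast_sum]
    refine sum_involution (fun p _ => p.swap) ?_ ?_ ?_ ?_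
    · intro p _
      rw [Prod.fst_swap, Prod.snd_swap, SimpleGraph.dist_comm]
      exact CharTwo.add_self_eq_zero _
    · intro p hp _ h
      exact (mem_offDiag.1 hp).2.2 (congrArg Prod.snd h)
    · intro p hp
      have := mem_offDiag.1 hp
      exact mem_offDiag.2 ⟨this.2.1, this.1, this.2.2.symm⟩
    · simp
  unfold wienerSet
  rw [Nat.mul_div_cancel' hdvd, ← sum_product', ← diag_union_offDiag,
    sum_union (disjoint_diag_offDiag A), sum_diag]
  simp

lemma two_mul_wienerColoring_pathGraph {n k : ℕ} (f : Fin n → Fin k) :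
    2 * (wienerColoring (pathGraph n) f : ℤ)
      = ∑ u, ∑ v, if f v = f u then |(u : ℤ) - v| else 0 := by
  have hclass : ∀ i, 2 * (wienerSet (pathGraph n) (colorClass f i) : ℤ)
      = ∑ u with f u = i, ∑ v, if f v = f u then |(u : ℤ) - v| else 0 := by
    intro i
    have h := two_mul_wienerSet (pathGraph n) (colorClass f i)
    zify at h
    rw [h]
    refine sum_congr rfl fun u hu => ?_
    rw [(mem_filter.1 hu).2, ← sum_filter]
    exact sum_congr rfl fun v _ => pathGraph_dist u v
  unfold wienerColoring
  rw [Nat.cast_sum, mul_sum, sum_congr rfl fun i _ => hclass i, sum_fiberwise]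

/-- The number of vertices of the color of `v` to the left of `v`, minus the number of those to
the right of `v`. -/
def colorSkew {n k : ℕ} (f : Fin n → Fin k) (v : Fin n) : ℤ :=
  ∑ w, if f w = f v then Int.sign ((v : ℤ) - w) else 0

lemma int_abs_eq_mul_sign (x : ℤ) : |x| = x * x.sign := by
  rw [Int.mul_sign_self, Int.natCast_natAbs]

lemma sum_colorSkew {n k : ℕ} (f : Fin n → Fin k) : ∑ v, colorSkew f v = 0 := by
  have h : ∑ v, colorSkew f v = -∑ v, colorSkew f v := by
    unfold colorSkew
    conv_rhs => rw [sum_comm]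
    simp only [← sum_neg_distrib]
    refine sum_congr rfl fun u _ => sum_congr rfl fun v _ => ?_
    rw [← neg_sub (u : ℤ), Int.sign_neg]
    by_cases hc : f u = f v <;> simp [hc, eq_comm]
  omega

lemma wienerColoring_pathGraph {n k : ℕ} (f : Fin n → Fin k) :
    (wienerColoring (pathGraph n) f : ℤ) = ∑ v : Fin n, (v : ℤ) * colorSkew f v := by
  have h := two_mul_wienerColoring_pathGraph f
  have h1 : ∑ u : Fin n, ∑ v : Fin n, (if f v = f u then |(u : ℤ) - v| else 0)
      = ∑ u : Fin n, (u : ℤ) * colorSkew f u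
        + ∑ u : Fin n, ∑ v : Fin n, (v : ℤ) * if f u = f v then Int.sign ((v : ℤ) - u) else 0 := by
    rw [← sum_add_distrib]
    refine sum_congr rfl fun u _ => ?_
    rw [colorSkew, mul_sum, ← sum_add_distrib]
    refine sum_congr rfl fun v _ => ?_
    rw [← neg_sub (u : ℤ) v, Int.sign_neg]
    by_cases hc : f u = f v
    · simp only [hc, if_true, int_abs_eq_mul_sign]
      ring
    · simp [hc, Ne.symm hc]
  have h2 : ∑ u : Fin n, ∑ v : Fin n, (v : ℤ) * (if f u = f v then Int.sign ((v : ℤ) - u) else 0)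
      = ∑ v : Fin n, (v : ℤ) * colorSkew f v := by
    rw [sum_comm]
    simp only [colorSkew, mul_sum]
  omega

lemma sum_sign_sub {n : ℕ} (u : Fin n) :
    ∑ v : Fin n, Int.sign ((u : ℤ) - v) = 2 * u - n + 1 := by
  have left : ∀ m : ℕ, m ≤ (u : ℕ) → ∑ j ∈ range m, Int.sign ((u : ℤ) - j) = m := by
    intro m
    induction m with
    | zero => simp
    | succ m ih =>
      intro hm
      rw [sum_range_succ, ih (by omega), Int.sign_eq_one_of_pos (by omega)]
      push_cast
      rfl
  have right : ∀ r : ℕ, ∑ j ∈ range ((u : ℕ) + 1 + r), Int.sign ((u : ℤ) - j) = u - r := by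
    intro r
    induction r with
    | zero => rw [add_zero, sum_range_succ, left _ le_rfl]; simp
    | succ r ih =>
      rw [← add_assoc, sum_range_succ, ih, Int.sign_eq_neg_one_of_neg (by push_cast; omega)]
      push_cast
      ring
  rw [Fin.sum_univ_eq_sum_range (fun j => Int.sign ((u : ℤ) - j)) n]
  have := right (n - 1 - u)
  rw [show (u : ℕ) + 1 + (n - 1 - u) = n by omega] at this
  rw [this]
  omega

lemma colorSkew_swapColors {n k : ℕ} {f : Fin n → Fin k} {a b : Fin n} (hab : (b : ℕ) = a + 1)
    (hne : f a ≠ f b) (v : Fin n) :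
    colorSkew (swapColors f a b) v = colorSkew f (Equiv.swap a b v) := by
  have hsign : ∀ x y : ℤ, (0 < x ↔ 0 < y) → (x < 0 ↔ y < 0) → x.sign = y.sign := by
    intro x y h1 h2
    rcases lt_trichotomy x 0 with h | rfl | h
    · rw [Int.sign_eq_neg_one_of_neg h, Int.sign_eq_neg_one_of_neg (h2.1 h)]
    · rw [show y = 0 by omega]
    · rw [Int.sign_eq_one_of_pos h, Int.sign_eq_one_of_pos (h1.1 h)]
  unfold colorSkew swapColors
  rw [← Equiv.sum_comp (Equiv.swap a b)
    (fun w => if f w = f (Equiv.swap a b v) then Int.sign (((Equiv.swap a b v : Fin n) : ℤ) - w)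
      else 0)]
  refine sum_congr rfl fun w _ => ?_
  simp only [Function.comp_apply]
  split_ifs with hc
  swap
  · rfl
  rw [Equiv.swap_apply_def, Equiv.swap_apply_def] at hc ⊢
  split_ifs at hc ⊢ with h1 h2 h3 h4 h5 h6 <;> simp_all only [Fin.ext_iff] <;>
    first
      | rfl
      | exact absurd hc hne
      | exact absurd hc.symm hne
      | exact absurd rfl hne
      | (apply hsign <;> omega)

lemma colorType_swapColors {V : Type*} [Fintype V] [DecidableEq V] {k : ℕ} (f : V → Fin k)
    (a b : V) : colorType (swapColors f a b) = colorType f := by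
  unfold colorType
  congr 1
  funext i
  refine card_equiv (Equiv.swap a b) fun v => ?_
  rw [colorClass, mem_filter, colorClass, mem_filter]
  simp [swapColors]

lemma IsWeakMaximizer.monotone_colorSkew {n k : ℕ} {f : Fin n → Fin k}
    (hf : IsWeakMaximizer (pathGraph n) f) : Monotone (colorSkew f) := by
  have step : ∀ a b : Fin n, (b : ℕ) = a + 1 → colorSkew f a ≤ colorSkew f b := by
    intro a b hab
    by_cases hc : f a = f b
    · unfold colorSkew
      rw [hc]
      refine sum_le_sum fun w _ => ?_
      split_ifs
      · rcases lt_trichotomy ((a : ℤ) - w) 0 with h | h | h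
        · rw [Int.sign_eq_neg_one_of_neg h]
          rcases lt_trichotomy ((b : ℤ) - w) 0 with h' | h' | h'
          · rw [Int.sign_eq_neg_one_of_neg h']
          · rw [h']; simp
          · rw [Int.sign_eq_one_of_pos h']; simp
        · rw [h, Int.sign_eq_one_of_pos (show 0 < (b : ℤ) - w by omega)]; simp
        · rw [Int.sign_eq_one_of_pos h,
            Int.sign_eq_one_of_pos (show 0 < (b : ℤ) - w by omega)]
      · rfl
    · have hle := hf.2 (swapColors f a b) (hf.1.comp (Equiv.surjective _))
        (colorType_swapColors f a b)
      zify at hle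
      rw [wienerColoring_pathGraph, wienerColoring_pathGraph] at hle
      simp only [colorSkew_swapColors hab hc] at hle
      rw [← Equiv.sum_comp (Equiv.swap a b)] at hle
      simp only [Equiv.swap_apply_self] at hle
      rw [← sub_nonneg, ← sum_sub_distrib, Fintype.sum_eq_add a b (fun h => hc (h ▸ rfl))] at hle
      · simp only [Equiv.swap_apply_left, Equiv.swap_apply_right] at hle
        rw [hab] at hle
        push_cast at hle
        linarith
      · rintro v ⟨ha, hb⟩
        rw [Equiv.swap_apply_of_ne_of_ne ha hb, sub_self]
  have steps : ∀ d : ℕ, ∀ u v : Fin n, (v : ℕ) = u + d → colorSkew f u ≤ colorSkew f v := by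
    intro d
    induction d with
    | zero => intro u v h; rw [Fin.ext (show (v : ℕ) = u by omega)]
    | succ d ih =>
      intro u v h
      have hw : (u : ℕ) + d < n := by omega
      exact (ih u ⟨u + d, hw⟩ rfl).trans (step ⟨u + d, hw⟩ v h)
  exact fun u v h => steps (v - u) u v (by have : (u : ℕ) ≤ v := h; omega)

lemma IsWeakMaximizer.four_mul_wienerColoring {n k : ℕ} {f : Fin n → Fin k}
    (hf : IsWeakMaximizer (pathGraph n) f) :
    4 * (wienerColoring (pathGraph n) f : ℤ)
      = ∑ u, ∑ v, |colorSkew f u - colorSkew f v| := by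
  have habs : ∀ u v : Fin n, |colorSkew f u - colorSkew f v|
      = colorSkew f u * Int.sign ((u : ℤ) - v) + colorSkew f v * Int.sign ((v : ℤ) - u) := by
    intro u v
    rw [← neg_sub (u : ℤ) v, Int.sign_neg]
    rcases lt_trichotomy u v with h | rfl | h
    · have := hf.monotone_colorSkew h.le
      rw [abs_of_nonpos (by omega), Int.sign_eq_neg_one_of_neg (by have : (u : ℕ) < v := h; omega)]
      ring
    · simp
    · have := hf.monotone_colorSkew h.le
      rw [abs_of_nonneg (by omega), Int.sign_eq_one_of_pos (by have : (v : ℕ) < u := h; omega)]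
      ring
  have hsum : ∑ u : Fin n, ∑ v : Fin n, colorSkew f u * Int.sign ((u : ℤ) - v)
      = 2 * wienerColoring (pathGraph n) f := by
    simp only [← mul_sum, sum_sign_sub]
    rw [wienerColoring_pathGraph, mul_sum]
    have : ∑ u : Fin n, colorSkew f u * (2 * (u : ℤ) - n + 1)
        = ∑ u : Fin n, 2 * ((u : ℤ) * colorSkew f u) + (1 - (n : ℤ)) * ∑ u, colorSkew f u := by
      rw [mul_sum, ← sum_add_distrib]
      exact sum_congr rfl fun u _ => by ring
    rw [this, sum_colorSkew, mul_zero, add_zero]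
  simp only [habs, sum_add_distrib]
  rw [sum_comm (f := fun u v : Fin n => colorSkew f v * Int.sign ((v : ℤ) - u)), hsum]
  ring

lemma sum_colorClass_comp_colorSkew {n k : ℕ} (f : Fin n → Fin k) (i : Fin k) (h : ℤ → ℤ) :
    ∑ v ∈ colorClass f i, h (colorSkew f v)
      = ∑ t ∈ range (colorClass f i).card, h (2 * (t : ℤ) - (colorClass f i).card + 1) := by
  set A := colorClass f i
  set e := A.orderEmbOfFin rfl
  have hA : ∀ g : Fin n → ℤ, ∑ v ∈ A, g v = ∑ t, g (e t) := by
    intro g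
    conv_lhs => rw [← A.map_orderEmbOfFin_univ rfl, sum_map]
    rfl
  have hskew : ∀ t, colorSkew f (e t) = 2 * (t : ℤ) - A.card + 1 := by
    intro t
    have ht : f (e t) = i := (mem_filter.1 (A.orderEmbOfFin_mem rfl t)).2
    rw [colorSkew, ht, ← sum_filter]
    refine (hA _).trans ((sum_congr rfl fun t' _ => ?_).trans (sum_sign_sub t))
    rcases lt_trichotomy t t' with hlt | rfl | hlt
    · have h1 : ((e t : Fin n) : ℕ) < e t' := e.strictMono hlt
      have h2 : (t : ℕ) < t' := hlt
      rw [Int.sign_eq_neg_one_of_neg (by omega), Int.sign_eq_neg_one_of_neg (by omega)]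
    · simp
    · have h1 : ((e t' : Fin n) : ℕ) < e t := e.strictMono hlt
      have h2 : (t' : ℕ) < t := hlt
      rw [Int.sign_eq_one_of_pos (by omega), Int.sign_eq_one_of_pos (by omega)]
  rw [hA]
  simp only [hskew]
  exact Fin.sum_univ_eq_sum_range (fun t => h (2 * (t : ℤ) - A.card + 1)) _

lemma IsWeakMaximizer.four_mul_wienerColoring_eq_sum_crossSpread {n k : ℕ} {f : Fin n → Fin k}
    (hf : IsWeakMaximizer (pathGraph n) f) :
    4 * (wienerColoring (pathGraph n) f : ℤ)
      = ∑ i, ∑ j, crossSpread (colorClass f i).card (colorClass f j).card := by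
  rw [hf.four_mul_wienerColoring, ← sum_fiberwise univ f]
  refine sum_congr rfl fun i _ => ?_
  have hinner : ∀ x : ℤ, ∑ v, |x - colorSkew f v| = ∑ j, ∑ t ∈ range (colorClass f j).card,
      |x - (2 * (t : ℤ) - (colorClass f j).card + 1)| := by
    intro x
    rw [← sum_fiberwise univ f]
    exact sum_congr rfl fun j _ => sum_colorClass_comp_colorSkew f j fun y => |x - y|
  simp only [hinner]
  refine (sum_colorClass_comp_colorSkew f i fun x => ∑ j, ∑ t ∈ range (colorClass f j).card,
    |x - (2 * (t : ℤ) - (colorClass f j).card + 1)|).trans ?_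
  rw [sum_comm]
  rfl

lemma sum_eq_add_add_sum_erase {ι M : Type*} [Fintype ι] [DecidableEq ι] [AddCommMonoid M]
    {p q : ι} (hpq : p ≠ q) (g : ι → M) :
    ∑ i, g i = g p + (g q + ∑ i ∈ (univ.erase p).erase q, g i) := by
  rw [add_sum_erase _ _ (mem_erase.2 ⟨hpq.symm, mem_univ q⟩), add_sum_erase _ _ (mem_univ p)]

lemma sum_crossSpread_eq {ι : Type*} [Fintype ι] [DecidableEq ι] {p q : ι} (hpq : p ≠ q)
    (c : ι → ℕ) :
    ∑ i, ∑ j, crossSpread (c i) (c j)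
      = (crossSpread (c p) (c p) + 2 * crossSpread (c p) (c q) + crossSpread (c q) (c q))
        + 2 * ∑ i ∈ (univ.erase p).erase q, (crossSpread (c p) (c i) + crossSpread (c q) (c i))
        + ∑ i ∈ (univ.erase p).erase q, ∑ j ∈ (univ.erase p).erase q,
            crossSpread (c i) (c j) := by
  have hcomm : ∀ x, ∑ i ∈ (univ.erase p).erase q, crossSpread (c i) x
      = ∑ i ∈ (univ.erase p).erase q, crossSpread x (c i) :=
    fun x => sum_congr rfl fun i _ => crossSpread_comm _ _
  simp only [sum_eq_add_add_sum_erase hpq, sum_add_distrib, hcomm]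
  rw [crossSpread_comm (c q) (c p)]
  ring

lemma sum_crossSpread_transfer_lt {ι : Type*} [Fintype ι] [DecidableEq ι] {p q : ι} (hpq : p ≠ q)
    {c c' : ι → ℕ} (h : c p + 2 ≤ c q) (hp : c' p = c p + 1) (hq : c' q + 1 = c q)
    (hrest : ∀ i, i ≠ p → i ≠ q → c' i = c i) :
    ∑ i, ∑ j, crossSpread (c' i) (c' j) < ∑ i, ∑ j, crossSpread (c i) (c j) := by
  obtain ⟨d, hd⟩ := Nat.exists_eq_add_of_le h
  have hcq : c q = c p + d + 2 := by omega
  have hcq' : c' q = c p + d + 1 := by omega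
  have hrest' : ∀ i ∈ (univ.erase p).erase q, c' i = c i := fun i hi =>
    hrest i (ne_of_mem_erase (mem_of_mem_erase hi)) (ne_of_mem_erase hi)
  rw [sum_crossSpread_eq hpq, sum_crossSpread_eq hpq, hp, hcq', hcq]
  have h1 := crossSpread_transfer_pair_lt (c p) d
  have h2 : ∑ i ∈ (univ.erase p).erase q,
        (crossSpread (c p + 1) (c' i) + crossSpread (c p + d + 1) (c' i))
      ≤ ∑ i ∈ (univ.erase p).erase q,
        (crossSpread (c p) (c i) + crossSpread (c p + d + 2) (c i)) :=
    sum_le_sum fun i hi => by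
      rw [hrest' i hi]
      exact crossSpread_transfer_le (c p) d (c i)
  have h3 : ∑ i ∈ (univ.erase p).erase q, ∑ j ∈ (univ.erase p).erase q, crossSpread (c' i) (c' j)
      = ∑ i ∈ (univ.erase p).erase q, ∑ j ∈ (univ.erase p).erase q, crossSpread (c i) (c j) :=
    sum_congr rfl fun i hi => sum_congr rfl fun j hj => by rw [hrest' i hi, hrest' j hj]
  linarith

lemma sum_crossSpread_eq_of_colorType_eq {V : Type*} [Fintype V] {k : ℕ} {f g : V → Fin k}
    (h : colorType f = colorType g) :
    ∑ i, ∑ j, crossSpread (colorClass f i).card (colorClass f j).card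
      = ∑ i, ∑ j, crossSpread (colorClass g i).card (colorClass g j).card := by
  have key : ∀ e : V → Fin k,
      ∑ i, ∑ j, crossSpread (colorClass e i).card (colorClass e j).card
        = ((colorType e).map fun a => ((colorType e).map (crossSpread a)).sum).sum := by
    intro e
    simp only [colorType, Multiset.map_map]
    rfl
  rw [key, key, h]

lemma exists_isWeakMaximizer_of_surjective {V : Type*} [Fintype V] [DecidableEq V] {k : ℕ}
    (G : SimpleGraph V) {f : V → Fin k} (hf : Function.Surjective f) :
    ∃ g : V → Fin k, IsWeakMaximizer G g ∧ colorType g = colorType f := by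
  classical
  obtain ⟨g, hg, hmax⟩ := exists_max_image
    (univ.filter fun g : V → Fin k => Function.Surjective g ∧ colorType g = colorType f)
    (wienerColoring G) ⟨f, mem_filter.2 ⟨mem_univ f, hf, rfl⟩⟩
  obtain ⟨-, hsurj, htype⟩ := mem_filter.1 hg
  exact ⟨g, ⟨hsurj, fun e he het => hmax e (mem_filter.2 ⟨mem_univ e, he, het.trans htype⟩)⟩,
    htype⟩

lemma surjective_iff_card_colorClass_pos {V : Type*} [Fintype V] {k : ℕ} {f : V → Fin k} :
    Function.Surjective f ↔ ∀ i, 0 < (colorClass f i).card := by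
  simp [Function.Surjective, colorClass, card_pos, Finset.Nonempty]

/-- A weak maximizer on a path with two color classes whose sizes differ by more than one does not
have the smallest Wiener index among weak maximizers. -/
lemma IsWeakMaximizer.exists_wienerColoring_lt {n k : ℕ} {f : Fin n → Fin k}
    (hf : IsWeakMaximizer (pathGraph n) f) {q p : Fin k}
    (h : (colorClass f p).card + 1 < (colorClass f q).card) :
    ∃ g : Fin n → Fin k, IsWeakMaximizer (pathGraph n) g ∧
      wienerColoring (pathGraph n) g < wienerColoring (pathGraph n) f := by
  have hpq : p ≠ q := by rintro rfl; omega
  obtain ⟨v, hv⟩ := hf.1 q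
  set e := Function.update f v p
  have hp : (colorClass e p).card = (colorClass f p).card + 1 := by
    have : colorClass e p = insert v (colorClass f p) := by
      ext w
      by_cases hw : w = v <;> simp [colorClass, e, Function.update_apply, hw]
    rw [this, card_insert_of_notMem (by simp [colorClass, hv, hpq.symm])]
  have hq : (colorClass e q).card + 1 = (colorClass f q).card := by
    have : colorClass e q = (colorClass f q).erase v := by
      ext w
      by_cases hw : w = v <;> simp [colorClass, e, Function.update_apply, hw, hpq]
    rw [this, card_erase_add_one (by simp [colorClass, hv])]
  have hrest : ∀ i, i ≠ p → i ≠ q → (colorClass e i).card = (colorClass f i).card := by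
    intro i hip hiq
    congr 1
    ext w
    by_cases hw : w = v <;>
      simp [colorClass, e, Function.update_apply, hw, hip.symm, hv, hiq.symm]
  have hsurj : Function.Surjective e := by
    rw [surjective_iff_card_colorClass_pos]
    intro i
    have := surjective_iff_card_colorClass_pos.1 hf.1 i
    by_cases hip : i = p
    · rw [hip]; omega
    by_cases hiq : i = q
    · rw [hiq]; omega
    rwa [hrest i hip hiq]
  obtain ⟨g, hg, htype⟩ := exists_isWeakMaximizer_of_surjective (pathGraph n) hsurj
  refine ⟨g, hg, ?_⟩
  have hlt := sum_crossSpread_transfer_lt (c := fun i => (colorClass f i).card)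
    (c' := fun i => (colorClass e i).card) hpq h hp hq hrest
  rw [← sum_crossSpread_eq_of_colorType_eq htype, ← hf.four_mul_wienerColoring_eq_sum_crossSpread,
    ← hg.four_mul_wienerColoring_eq_sum_crossSpread] at hlt
  omega

lemma IsWeakMaximizer.exists_balanced_le {n k : ℕ} {f : Fin n → Fin k}
    (hf : IsWeakMaximizer (pathGraph n) f) :
    ∃ g : Fin n → Fin k, IsWeakMaximizer (pathGraph n) g ∧
      wienerColoring (pathGraph n) g ≤ wienerColoring (pathGraph n) f ∧
      ∀ i j, (colorClass g i).card ≤ (colorClass g j).card + 1 := by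
  induction hW : wienerColoring (pathGraph n) f using Nat.strong_induction_on generalizing f with
  | _ W ih =>
    by_cases hbal : ∀ i j, (colorClass f i).card ≤ (colorClass f j).card + 1
    · exact ⟨f, hf, hW.le, hbal⟩
    · push Not at hbal
      obtain ⟨i, j, hij⟩ := hbal
      obtain ⟨g, hg, hlt⟩ := hf.exists_wienerColoring_lt hij
      obtain ⟨e, he, hle, hebal⟩ := ih _ (hW ▸ hlt) hg rfl
      exact ⟨e, he, hle.trans (hW ▸ hlt.le), hebal⟩

lemma sum_card_colorClass {V : Type*} [Fintype V] {k : ℕ} (f : V → Fin k) :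
    ∑ i, (colorClass f i).card = Fintype.card V :=
  (card_eq_sum_card_fiberwise fun _ _ => mem_univ _).symm

lemma eq_replicate_add_replicate_succ {s : Multiset ℕ} {q : ℕ}
    (h : ∀ x ∈ s, x = q ∨ x = q + 1) :
    s = Multiset.replicate (s.count q) q + Multiset.replicate (s.count (q + 1)) (q + 1) := by
  rw [← Multiset.filter_eq', ← Multiset.filter_eq']
  conv_lhs => rw [← Multiset.filter_add_not (· = q) s]
  congr 1
  refine Multiset.filter_congr fun x hx => ?_
  have := h x hx
  omega

lemma colorType_eq_equitableType {V : Type*} [Fintype V] {k : ℕ} {f : V → Fin k}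
    (h : ∀ i j, (colorClass f i).card ≤ (colorClass f j).card + 1) :
    colorType f = equitableType (Fintype.card V) k := by
  set N := Fintype.card V
  have hmem : ∀ x ∈ colorType f, x = N / k ∨ x = N / k + 1 := by
    intro x hx
    obtain ⟨i, -, rfl⟩ := Multiset.mem_map.1 hx
    have heq := Finset.equitableOn_iff.1 (fun i j _ _ => h i j :
      Set.EquitableOn ((univ : Finset (Fin k)) : Set (Fin k)) fun i => (colorClass f i).card)
      i (mem_univ i)
    rwa [sum_card_colorClass, card_univ, Fintype.card_fin] at heq
  have hdecomp := eq_replicate_add_replicate_succ hmem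
  have hcard : (colorType f).card = k := by simp [colorType]
  have hsum : (colorType f).sum = N := sum_card_colorClass f
  have hN := Nat.mod_add_div N k
  set x := (colorType f).count (N / k)
  set y := (colorType f).count (N / k + 1)
  rw [hdecomp, Multiset.card_add, Multiset.card_replicate, Multiset.card_replicate] at hcard
  rw [hdecomp, Multiset.sum_add, Multiset.sum_replicate, Multiset.sum_replicate, smul_eq_mul,
    smul_eq_mul] at hsum
  have hy : y = N % k := by
    have : k * (N / k) = x * (N / k) + y * (N / k) := by rw [← hcard]; ring
    rw [mul_add, mul_one] at hsum
    omega
  rw [hdecomp, equitableType, ← hy, show k - y = x by omega]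

/-- For `2 ≤ k ≤ n` and `f` a `k`-color weak maximizer of `W` on `P_n`:
`W(f)` is minimal among `k`-color weak maximizers iff the sizes of any two color
classes of `f` differ by at most one. -/
theorem path_min_weakMaximizer (n k : ℕ) (hk : 2 ≤ k) (hkn : k ≤ n)
    (f : Fin n → Fin k) (hf : IsWeakMaximizer (SimpleGraph.pathGraph n) f) :
    (∀ g : Fin n → Fin k, IsWeakMaximizer (SimpleGraph.pathGraph n) g →
        wienerColoring (SimpleGraph.pathGraph n) f
          ≤ wienerColoring (SimpleGraph.pathGraph n) g)
      ↔ ∀ i j : Fin k, (colorClass f i).card ≤ (colorClass f j).card + 1 := by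
  constructor
  · intro hmin i j
    by_contra! hij
    obtain ⟨g, hg, hlt⟩ := hf.exists_wienerColoring_lt hij
    exact absurd (hmin g hg) (not_le.2 hlt)
  · intro hbal g hg
    obtain ⟨e, he, hle, hebal⟩ := hg.exists_balanced_le
    have htype : colorType f = colorType e := by
      rw [colorType_eq_equitableType hbal, colorType_eq_equitableType hebal]
    exact (he.2 f hf.1 htype).trans hle
end

section
/- Suppose f, g : V(C_n) → {1,...,k} are k-color weak maximizers of the Wiener index W on C_n and type(g) ≺ type(f). Then W(g) ≤ W(f). -/
open SimpleGraph Finset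

theorem exists_walk_add_natCast (n : ℕ) (u : ZMod n) (j : ℕ) :
    ∃ w : (cycleGraphZMod n).Walk u (u + j), w.length ≤ j := by
  induction j with
  | zero => exact ⟨(Walk.nil : (cycleGraphZMod n).Walk u u).copy rfl (by simp), by simp⟩
  | succ j ih =>
    obtain ⟨w, hw⟩ := ih
    by_cases h : u + (j : ZMod n) = u + ((j + 1 : ℕ) : ZMod n)
    · exact ⟨w.copy rfl h, by simp; omega⟩
    · have hadj : (cycleGraphZMod n).Adj (u + j) (u + ((j + 1 : ℕ) : ZMod n)) :=
        ⟨h, Or.inl (by push_cast; ring)⟩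
      exact ⟨w.concat hadj, by simp; omega⟩

theorem natAbs_valMinAbs_sub_le_length (n : ℕ) [NeZero n] {u v : ZMod n}
    (w : (cycleGraphZMod n).Walk u v) : (v - u).valMinAbs.natAbs ≤ w.length := by
  induction w with
  | nil => simp
  | @cons u x v hadj w ih =>
    have hone : (1 : ZMod n).valMinAbs.natAbs ≤ 1 := by
      rcases Nat.lt_or_ge (n / 2) 1 with hn | hn
      · exact (ZMod.natAbs_valMinAbs_le _).trans hn.le
      · have := ZMod.valMinAbs_natCast_of_le_half hn
        simp_all
    have hstep : (x - u).valMinAbs.natAbs ≤ 1 := by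
      rcases hadj.2 with h | h
      · rw [h]; simpa using hone
      · rw [h, ← ZMod.natAbs_valMinAbs_neg]; simpa using hone
    have h := ZMod.natAbs_valMinAbs_add_le (v - x) (x - u)
    rw [sub_add_sub_cancel] at h
    have := Int.natAbs_add_le (v - x).valMinAbs (x - u).valMinAbs
    simp only [Walk.length_cons]
    omega

theorem exists_walk_length_le_of_sub_eq (n : ℕ) {u v : ZMod n} {j : ℕ}
    (h : v - u = j ∨ u - v = j) : ∃ w : (cycleGraphZMod n).Walk u v, w.length ≤ j := by
  rcases h with h | h
  · obtain ⟨w, hw⟩ := exists_walk_add_natCast n u j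
    exact ⟨w.copy rfl (by rw [← h]; ring), by simpa⟩
  · obtain ⟨w, hw⟩ := exists_walk_add_natCast n v j
    exact ⟨(w.copy rfl (by rw [← h]; ring)).reverse, by simpa⟩

theorem exists_sub_eq_natCast (n : ℕ) [NeZero n] (u v : ZMod n) :
    ∃ j ≤ n / 2, v - u = (j : ZMod n) ∨ u - v = (j : ZMod n) := by
  refine ⟨(v - u).valMinAbs.natAbs, ZMod.natAbs_valMinAbs_le _, ?_⟩
  have h := ZMod.coe_valMinAbs (v - u)
  rcases Int.natAbs_eq (v - u).valMinAbs with h' | h'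
  · left
    rw [← Int.cast_natCast, ← h']
    exact h.symm
  · right
    rw [← Int.cast_natCast, ← neg_eq_iff_eq_neg.mpr h', Int.cast_neg, h, neg_sub]

theorem cycleGraphZMod_dist_eq (n : ℕ) [NeZero n] {u v : ZMod n} {j : ℕ} (hj : j ≤ n / 2)
    (h : v - u = j ∨ u - v = j) : (cycleGraphZMod n).dist u v = j := by
  obtain ⟨w, hw⟩ := exists_walk_length_le_of_sub_eq n h
  refine le_antisymm ((dist_le w).trans hw) ?_
  obtain ⟨p, hp⟩ := w.reachable.exists_walk_length_eq_dist
  have hl := natAbs_valMinAbs_sub_le_length n p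
  have hv := ZMod.valMinAbs_natCast_of_le_half hj
  rw [← hp]
  rcases h with h | h
  · rw [h, hv] at hl; simpa using hl
  · rw [← ZMod.natAbs_valMinAbs_neg, neg_sub, h, hv] at hl; simpa using hl

/-- The arc of `⌊n / 2⌋` consecutive vertices of the cycle starting at `y`. -/
def halfArc (n : ℕ) [NeZero n] (y : ZMod n) : Finset (ZMod n) :=
  univ.filter fun v => (v - y).val < n / 2

theorem mem_halfArc {n : ℕ} [NeZero n] {y v : ZMod n} :
    v ∈ halfArc n y ↔ (v - y).val < n / 2 := by
  simp [halfArc]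

theorem card_common_halfArc_add (n : ℕ) [NeZero n] {u v : ZMod n} {j : ℕ} (hj : j ≤ n / 2)
    (h : v - u = j) :
    #{y : ZMod n | u ∈ halfArc n y ∧ v ∈ halfArc n y} + j = n / 2 := by
  have hn : 0 < n := Nat.pos_of_ne_zero (NeZero.ne n)
  have hv : v = u + j := by rw [← h]; ring
  have key : ({y : ZMod n | u ∈ halfArc n y ∧ v ∈ halfArc n y} : Finset (ZMod n)) =
      (range (n / 2 - j)).image fun i : ℕ => u - (i : ZMod n) := by
    ext y
    simp only [mem_filter, mem_univ, true_and, mem_halfArc, mem_image, Finset.mem_range]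
    constructor
    · rintro ⟨h₁, h₂⟩
      refine ⟨(u - y).val, ?_, by simp⟩
      have : v - y = ((u - y).val + j : ℕ) := by
        push_cast; simp [hv]; ring
      rw [this, ZMod.val_cast_of_lt (by omega)] at h₂
      omega
    · rintro ⟨i, hi, rfl⟩
      have : v - (u - (i : ZMod n)) = (i + j : ℕ) := by
        push_cast; rw [hv]; ring
      rw [this, sub_sub_cancel, ZMod.val_cast_of_lt (by omega), ZMod.val_cast_of_lt (by omega)]
      omega
  rw [key, card_image_of_injOn, card_range]
  · omega
  · intro a ha b hb hab
    simp only [coe_range, Set.mem_Iio] at ha hb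
    have := congrArg ZMod.val (sub_right_inj.mp hab)
    rwa [ZMod.val_cast_of_lt (by omega), ZMod.val_cast_of_lt (by omega)] at this

theorem card_common_halfArc_add_dist (n : ℕ) [NeZero n] (u v : ZMod n) :
    #{y : ZMod n | u ∈ halfArc n y ∧ v ∈ halfArc n y} + (cycleGraphZMod n).dist u v = n / 2 := by
  obtain ⟨j, hj, h⟩ := exists_sub_eq_natCast n u v
  rw [cycleGraphZMod_dist_eq n hj h]
  rcases h with h | h
  · exact card_common_halfArc_add n hj h
  · simpa only [and_comm] using card_common_halfArc_add n hj h

theorem sum_card_inter_halfArc (n : ℕ) [NeZero n] (A : Finset (ZMod n)) :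
    ∑ y, #(A ∩ halfArc n y) = #A * (n / 2) := by
  have h (u : ZMod n) : #{y : ZMod n | u ∈ halfArc n y} = n / 2 := by
    simpa using card_common_halfArc_add_dist n u u
  simp only [← filter_mem_eq_inter, card_filter]
  rw [sum_comm]
  simp only [← card_filter, h, sum_const, smul_eq_mul]

theorem sum_dist_add_sum_sq (n : ℕ) [NeZero n] (A : Finset (ZMod n)) :
    ∑ p ∈ A.offDiag, (cycleGraphZMod n).dist p.1 p.2 + ∑ y, #(A ∩ halfArc n y) ^ 2 =
      #A ^ 2 * (n / 2) := by
  have h1 : ∑ p ∈ A.offDiag, (cycleGraphZMod n).dist p.1 p.2 =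
      ∑ p ∈ A ×ˢ A, (cycleGraphZMod n).dist p.1 p.2 := by
    refine sum_subset (fun p => ?_) fun p hp hp' => ?_
    · simp only [mem_offDiag, mem_product]; tauto
    · simp only [mem_offDiag, mem_product] at hp hp'
      have : p.1 = p.2 := by tauto
      rw [this, SimpleGraph.dist_self]
  have h2 : ∑ y, #(A ∩ halfArc n y) ^ 2 =
      ∑ p ∈ A ×ˢ A, #{y : ZMod n | p.1 ∈ halfArc n y ∧ p.2 ∈ halfArc n y} := by
    simp only [card_filter]
    rw [sum_comm]
    refine sum_congr rfl fun y _ => ?_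
    rw [← card_filter, filter_product, card_product, filter_mem_eq_inter, sq]
  rw [h1, h2, ← sum_add_distrib]
  rw [sum_congr rfl fun p _ => (add_comm _ _).trans (card_common_halfArc_add_dist n p.1 p.2),
    sum_const, card_product, smul_eq_mul, sq]

/-- The gain in the maximum Wiener index when a set of `j` vertices is allowed one more vertex. -/
def wienerIncrement (n j : ℕ) : ℕ :=
  if Even j then (n - n / 2) * (j / 2) else (n / 2) * ((j + 1) / 2)

/-- The largest Wiener index of a set of `m` vertices of the cycle on `n` vertices. -/
def maxWiener (n m : ℕ) : ℕ := ∑ j ∈ range m, wienerIncrement n j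

theorem two_mul_maxWiener (n m : ℕ) :
    2 * (maxWiener n m : ℤ) = m ^ 2 * (n / 2 : ℕ) -
      (2 * ((m + 1) / 2 : ℕ) - 1) * (m * (n / 2 : ℕ)) +
        n * (((m + 1) / 2 : ℕ) * (((m + 1) / 2 : ℕ) - 1)) := by
  have hn : (n : ℤ) = (n - n / 2 : ℕ) + (n / 2 : ℕ) := by omega
  induction m with
  | zero => simp [maxWiener]
  | succ m ih =>
    rw [maxWiener, sum_range_succ, ← maxWiener, Nat.cast_add, mul_add, ih, wienerIncrement, hn]
    generalize n - n / 2 = c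
    generalize n / 2 = h
    obtain ⟨t, rfl | rfl⟩ := Nat.even_or_odd' m
    · have h1 : (2 * t + 1 + 1) / 2 = t + 1 := by omega
      have h2 : (2 * t + 1) / 2 = t := by omega
      have h3 : 2 * t / 2 = t := by omega
      simp only [even_two_mul, if_true, h1, h2, h3]
      push_cast
      ring
    · have h1 : (2 * t + 1 + 1) / 2 = t + 1 := by omega
      have h2 : (2 * t + 1 + 1 + 1) / 2 = t + 1 := by omega
      simp only [Nat.not_even_bit1, if_false, h1, h2]
      push_cast
      ring

theorem wienerIncrement_le_succ {n j : ℕ} (hj : j + 1 < n) :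
    wienerIncrement n j ≤ wienerIncrement n (j + 1) := by
  obtain ⟨t, rfl | rfl⟩ := Nat.even_or_odd' j
  · have h1 : (2 * t + 1 + 1) / 2 = t + 1 := by omega
    have h2 : 2 * t / 2 = t := by omega
    simp only [wienerIncrement, even_two_mul, if_true, Nat.not_even_bit1, if_false, h1, h2]
    have h3 : n - n / 2 ≤ n / 2 + 1 := by omega
    have h4 : t ≤ n / 2 := by omega
    nlinarith
  · have h1 : (2 * t + 1 + 1) / 2 = t + 1 := by omega
    have h2 : Even (2 * t + 1 + 1) := ⟨t + 1, by ring⟩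
    simp only [wienerIncrement, h2, if_true, Nat.not_even_bit1, if_false, h1]
    gcongr
    omega

theorem sum_dist_add_sum_eq_two_mul_maxWiener (n : ℕ) [NeZero n] (A : Finset (ZMod n)) :
    (∑ p ∈ A.offDiag, (cycleGraphZMod n).dist p.1 p.2 : ℕ) +
      ∑ y, ((#(A ∩ halfArc n y) : ℤ) - ((#A + 1) / 2 : ℕ)) *
        (#(A ∩ halfArc n y) - ((#A + 1) / 2 : ℕ) + 1) = 2 * (maxWiener n #A : ℤ) := by
  have h1 : ((∑ p ∈ A.offDiag, (cycleGraphZMod n).dist p.1 p.2 : ℕ) : ℤ) +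
      ∑ y, (#(A ∩ halfArc n y) : ℤ) ^ 2 = #A ^ 2 * (n / 2 : ℕ) := by
    exact_mod_cast sum_dist_add_sum_sq n A
  have h2 : ∑ y, (#(A ∩ halfArc n y) : ℤ) = #A * (n / 2 : ℕ) := by
    exact_mod_cast sum_card_inter_halfArc n A
  rw [two_mul_maxWiener, ← h1, ← h2]
  generalize (((#A + 1) / 2 : ℕ) : ℤ) = τ
  have h3 : ∑ y, ((#(A ∩ halfArc n y) : ℤ) - τ) * (#(A ∩ halfArc n y) - τ + 1) =
      ∑ y, (#(A ∩ halfArc n y) : ℤ) ^ 2 - (2 * τ - 1) * ∑ y, (#(A ∩ halfArc n y) : ℤ) +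
        n * (τ * (τ - 1)) := by
    have h4 : (n : ℤ) * (τ * (τ - 1)) = ∑ _y : ZMod n, τ * (τ - 1) := by
      simp [ZMod.card]
    rw [h4, mul_sum, ← sum_sub_distrib, ← sum_add_distrib]
    exact sum_congr rfl fun y _ => by ring
  rw [h3]
  ring

theorem wienerSet_le_maxWiener (n : ℕ) [NeZero n] (A : Finset (ZMod n)) :
    wienerSet (cycleGraphZMod n) A ≤ maxWiener n #A := by
  have h := sum_dist_add_sum_eq_two_mul_maxWiener n A
  have h0 : 0 ≤ ∑ y, ((#(A ∩ halfArc n y) : ℤ) - ((#A + 1) / 2 : ℕ)) *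
      (#(A ∩ halfArc n y) - ((#A + 1) / 2 : ℕ) + 1) := by
    refine sum_nonneg fun y _ => ?_
    generalize (#(A ∩ halfArc n y) : ℤ) - ((#A + 1) / 2 : ℕ) = x
    rcases le_or_gt 0 x with hx | hx
    · exact mul_nonneg hx (by omega)
    · exact mul_nonneg_of_nonpos_of_nonpos hx.le (by omega)
  unfold wienerSet
  omega

theorem wienerSet_eq_maxWiener {n : ℕ} [NeZero n] {A : Finset (ZMod n)}
    (hA : ∀ y, #(A ∩ halfArc n y) = (#A + 1) / 2 ∨ #(A ∩ halfArc n y) + 1 = (#A + 1) / 2) :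
    wienerSet (cycleGraphZMod n) A = maxWiener n #A := by
  have h := sum_dist_add_sum_eq_two_mul_maxWiener n A
  rw [sum_eq_zero (s := univ)] at h
  · unfold wienerSet
    omega
  · intro y _
    rcases hA y with h | h <;> rw [← h] <;> simp

/-- An ordering of the vertices of the cycle in which consecutive vertices are nearly antipodal. -/
def antipodalOrder (n j : ℕ) : ZMod n := ((j % 2 * (n - n / 2) + j / 2 : ℕ) : ZMod n)

theorem val_antipodalOrder {n j : ℕ} (hj : j < n) :
    (antipodalOrder n j).val = j % 2 * (n - n / 2) + j / 2 := by
  refine ZMod.val_cast_of_lt ?_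
  rcases Nat.mod_two_eq_zero_or_one j with h | h <;> rw [h] <;> omega

theorem antipodalOrder_injOn (n : ℕ) : Set.InjOn (antipodalOrder n) (Set.Iio n) := by
  intro a ha b hb hab
  simp only [Set.mem_Iio] at ha hb
  have h := congrArg ZMod.val hab
  rw [val_antipodalOrder ha, val_antipodalOrder hb] at h
  rcases Nat.mod_two_eq_zero_or_one a with h1 | h1 <;>
    rcases Nat.mod_two_eq_zero_or_one b with h2 | h2 <;> rw [h1, h2] at h <;> omega

theorem antipodalOrder_eq_mul {n : ℕ} (hn : Odd n) (j : ℕ) :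
    antipodalOrder n j = j * (n - n / 2 : ℕ) := by
  obtain ⟨h, rfl⟩ := hn
  have h1 : 2 * h + 1 - (2 * h + 1) / 2 = h + 1 := by omega
  have h2 : (2 * h + 1 : ZMod (2 * h + 1)) = 0 := by
    exact_mod_cast ZMod.natCast_self (2 * h + 1)
  obtain ⟨t, rfl | rfl⟩ := Nat.even_or_odd' j
  · have h3 : 2 * t / 2 = t := by omega
    simp only [antipodalOrder, h1, Nat.mul_mod_right, h3]
    push_cast
    linear_combination (-t : ZMod (2 * h + 1)) * h2
  · have h3 : (2 * t + 1) / 2 = t := by omega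
    have h4 : (2 * t + 1) % 2 = 1 := by omega
    simp only [antipodalOrder, h1, h3, h4]
    push_cast
    linear_combination (-t : ZMod (2 * h + 1)) * h2

theorem card_filter_Ico_add {w : ℕ → Prop} [DecidablePred w] {C : ℕ → ℕ} {n : ℕ}
    (hC : ∀ j < n, C (j + 1) = C j + if w j then 1 else 0) {s m : ℕ} (h : s + m ≤ n) :
    #{j ∈ Ico s (s + m) | w j} + C s = C (s + m) := by
  induction m with
  | zero => simp
  | succ m ih =>
    rw [← add_assoc, hC _ (by omega), ← ih (by omega), card_filter, card_filter,
      sum_Ico_succ_top (by omega)]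
    ring

theorem card_filter_antipodalOrder_of_odd {n : ℕ} [NeZero n] (hn : Odd n) (y : ZMod n)
    {s m : ℕ} (h : s + m ≤ n) :
    #{j ∈ Ico s (s + m) | antipodalOrder n j ∈ halfArc n y} = (m + 1) / 2 ∨
      #{j ∈ Ico s (s + m) | antipodalOrder n j ∈ halfArc n y} + 1 = (m + 1) / 2 := by
  have hn2 := Nat.odd_iff.mp hn
  set r := (-(2 * y)).val with hr
  have hrn : r < n := ZMod.val_lt _
  have hmem (j : ℕ) : antipodalOrder n j ∈ halfArc n y ↔
      (j + r) % n % 2 = 0 ∧ (j + r) % n + 1 ≠ n := by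
    have hlt : (j + r) % n < n := Nat.mod_lt _ (by omega)
    have h2 : (2 : ZMod n) * (n - n / 2 : ℕ) = 1 := by
      have : ((2 * (n - n / 2) : ℕ) : ZMod n) = (n + 1 : ℕ) := by congr 1; omega
      push_cast at this
      simpa using this
    have h1 : antipodalOrder n j - y = antipodalOrder n ((j + r) % n) := by
      rw [antipodalOrder_eq_mul hn, antipodalOrder_eq_mul hn, ZMod.natCast_mod, Nat.cast_add,
        hr, ZMod.natCast_zmod_val]
      linear_combination y * h2
    rw [mem_halfArc, h1, val_antipodalOrder hlt]
    rcases Nat.mod_two_eq_zero_or_one ((j + r) % n) with h3 | h3 <;> rw [h3] <;> omega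
  have hC := card_filter_Ico_add (w := fun j => antipodalOrder n j ∈ halfArc n y)
    (C := fun j => if j + r < n then (j + r + 1) / 2 else n / 2 + (j + r - n + 1) / 2) (n := n)
    (fun j hj => by
      simp only [hmem]
      rcases lt_or_ge (j + r) n with hlt | hge
      · rw [Nat.mod_eq_of_lt hlt]
        split_ifs <;> omega
      · have hmod : (j + r) % n = j + r - n := by
          rw [Nat.mod_eq_sub_mod hge]
          exact Nat.mod_eq_of_lt (by omega)
        rw [hmod]
        split_ifs <;> omega) h
  split_ifs at hC <;> omega

theorem card_filter_antipodalOrder_of_even {n : ℕ} [NeZero n] (hn : Even n) (y : ZMod n)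
    {s m : ℕ} (h : s + m ≤ n) (hsm : Odd m ∨ Even s) :
    #{j ∈ Ico s (s + m) | antipodalOrder n j ∈ halfArc n y} = (m + 1) / 2 ∨
      #{j ∈ Ico s (s + m) | antipodalOrder n j ∈ halfArc n y} + 1 = (m + 1) / 2 := by
  have hn0 := NeZero.ne n
  rw [Nat.even_iff] at hn
  rw [Nat.odd_iff, Nat.even_iff] at hsm
  have hmem (t : ℕ) : antipodalOrder n (2 * t + 1) ∈ halfArc n y ↔
      antipodalOrder n (2 * t) ∉ halfArc n y := by
    have h1 : antipodalOrder n (2 * t + 1) - y =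
        (antipodalOrder n (2 * t) - y) + (n / 2 : ℕ) := by
      have h3 : (2 * t + 1) / 2 = t := by omega
      have h4 : (2 * t + 1) % 2 = 1 := by omega
      have h5 : n - n / 2 = n / 2 := by omega
      have h6 : 2 * t / 2 = t := by omega
      simp only [antipodalOrder, h3, h4, h5, h6, Nat.mul_mod_right]
      push_cast
      ring
    rw [mem_halfArc, mem_halfArc, h1, ZMod.val_add, ZMod.val_cast_of_lt (a := n / 2) (by omega)]
    have hlt := ZMod.val_lt (antipodalOrder n (2 * t) - y)
    generalize (antipodalOrder n (2 * t) - y).val = x at hlt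
    rcases lt_or_ge (x + n / 2) n with hlt' | hge
    · rw [Nat.mod_eq_of_lt hlt']; omega
    · rw [Nat.mod_eq_sub_mod hge, Nat.mod_eq_of_lt (by omega)]; omega
  have hC := card_filter_Ico_add (w := fun j => antipodalOrder n j ∈ halfArc n y)
    (C := fun j => j / 2 + if j % 2 = 1 ∧ antipodalOrder n (2 * (j / 2)) ∈ halfArc n y
      then 1 else 0) (n := n)
    (fun j _ => by
      obtain ⟨t, rfl | rfl⟩ := Nat.even_or_odd' j
      · have h3 : (2 * t + 1) / 2 = t := by omega
        have h6 : 2 * t / 2 = t := by omega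
        have h4 : (2 * t + 1) % 2 = 1 := by omega
        simp [h3, h4, h6]
      · have h3 : (2 * t + 1) / 2 = t := by omega
        have h4 : (2 * t + 1) % 2 = 1 := by omega
        have h5 : (2 * t + 1 + 1) / 2 = t + 1 := by omega
        have h6 : (2 * t + 1 + 1) % 2 = 0 := by omega
        by_cases hw : antipodalOrder n (2 * t) ∈ halfArc n y <;> simp [h3, h4, h5, h6, hmem, hw]) h
  split_ifs at hC <;> omega

theorem wienerSet_image_antipodalOrder {n : ℕ} [NeZero n] {s m : ℕ} (h : s + m ≤ n)
    (hsm : Odd n ∨ Odd m ∨ Even s) :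
    wienerSet (cycleGraphZMod n) ((Ico s (s + m)).image (antipodalOrder n)) = maxWiener n m := by
  have hinj : Set.InjOn (antipodalOrder n) (Ico s (s + m)) :=
    (antipodalOrder_injOn n).mono fun j hj => by
      simp only [coe_Ico, Set.mem_Ico] at hj
      exact Set.mem_Iio.mpr (by omega)
  have hcard : #((Ico s (s + m)).image (antipodalOrder n)) = m := by
    rw [card_image_of_injOn hinj]; simp
  have hinter (y : ZMod n) : #((Ico s (s + m)).image (antipodalOrder n) ∩ halfArc n y) =
      #{j ∈ Ico s (s + m) | antipodalOrder n j ∈ halfArc n y} := by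
    rw [← filter_mem_eq_inter, filter_image, card_image_of_injOn]
    exact hinj.mono (coe_subset.mpr (filter_subset _ _))
  rw [wienerSet_eq_maxWiener, hcard]
  intro y
  rw [hinter, hcard]
  rcases Nat.even_or_odd n with hn | hn
  · exact card_filter_antipodalOrder_of_even hn y h
      (hsm.resolve_left (Nat.not_odd_iff_even.mpr hn))
  · exact card_filter_antipodalOrder_of_odd hn y h

theorem sum_take_le_sum_map_tsub_add (L : List ℕ) (l s : ℕ) :
    (L.take s).sum ≤ (L.map (· - l)).sum + s * l := by
  induction L generalizing s with
  | nil => simp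
  | cons a L ih =>
    cases s with
    | zero => simp
    | succ s =>
      have := ih s
      simp only [List.take_succ_cons, List.sum_cons, List.map_cons, add_mul]
      omega

theorem exists_sum_map_tsub_add_eq_sum_take {L : List ℕ} (hL : L.Pairwise (· ≥ ·)) (l : ℕ) :
    ∃ s, (L.map (· - l)).sum + s * l = (L.take s).sum := by
  induction L with
  | nil => exact ⟨0, by simp⟩
  | cons a L ih =>
    rw [List.pairwise_cons] at hL
    by_cases ha : a ≤ l
    · refine ⟨0, ?_⟩
      simp only [zero_mul, add_zero, List.take_zero, List.sum_nil]
      refine List.sum_eq_zero fun x hx => ?_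
      obtain ⟨b, hb, rfl⟩ := List.mem_map.mp hx
      rcases List.mem_cons.mp hb with rfl | hb
      · omega
      · have := hL.1 b hb
        omega
    · obtain ⟨s, hs⟩ := ih hL.2
      refine ⟨s + 1, ?_⟩
      simp only [List.take_succ_cons, List.sum_cons, List.map_cons, add_mul]
      omega

theorem sum_map_reverse_sort (x : Multiset ℕ) (F : ℕ → ℕ) :
    ((x.sort (· ≤ ·)).reverse.map F).sum = (x.map F).sum := by
  conv_rhs => rw [← Multiset.sort_eq x (· ≤ ·)]
  rw [List.map_reverse, List.sum_reverse, Multiset.map_coe, Multiset.sum_coe]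

theorem MajorizedBy.sum_map_tsub_le {x y : Multiset ℕ} (h : MajorizedBy x y) (l : ℕ) :
    (x.map (· - l)).sum ≤ (y.map (· - l)).sum := by
  have hx : (x.sort (· ≤ ·)).reverse.Pairwise (· ≥ ·) :=
    List.pairwise_reverse.mpr (Multiset.pairwise_sort x (· ≤ ·))
  obtain ⟨s, hs⟩ := exists_sum_map_tsub_add_eq_sum_take hx l
  have h1 := sum_take_le_sum_map_tsub_add (y.sort (· ≤ ·)).reverse l s
  have h2 := h.2.2 s
  unfold sumLargest at h2
  rw [sum_map_reverse_sort] at hs h1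
  omega

theorem sum_range_eq_sum_tsub {Δ : ℕ → ℕ} {n : ℕ} (hΔ : ∀ j, j + 1 < n → Δ j ≤ Δ (j + 1))
    {m : ℕ} (hm : m ≤ n) :
    ∑ j ∈ range m, Δ j =
      Δ 0 * m + ∑ l ∈ range n, (Δ (l + 1) - Δ l) * (m - (l + 1)) := by
  have htel (j : ℕ) (hj : j < n) : Δ j = Δ 0 + ∑ l ∈ range j, (Δ (l + 1) - Δ l) := by
    induction j with
    | zero => simp
    | succ j ih =>
      rw [sum_range_succ]
      have := ih (by omega)
      have := hΔ j hj
      omega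
  rw [← sum_subset (range_subset_range.mpr hm) fun l _ hl => ?_]
  · induction m with
    | zero => simp
    | succ m ih =>
      have h1 : ∑ l ∈ range m, (Δ (l + 1) - Δ l) * (m + 1 - (l + 1)) =
          ∑ l ∈ range m, (Δ (l + 1) - Δ l) * (m - (l + 1)) +
            ∑ l ∈ range m, (Δ (l + 1) - Δ l) := by
        rw [← sum_add_distrib]
        refine sum_congr rfl fun l hl => ?_
        have := Finset.mem_range.mp hl
        rw [show m + 1 - (l + 1) = m - (l + 1) + 1 by omega, mul_add, mul_one]
      rw [sum_range_succ, sum_range_succ, ih (by omega), h1, htel m (by omega)]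
      simp
      ring
  · rw [Finset.mem_range] at hl
    rw [Nat.sub_eq_zero_of_le (show m ≤ l + 1 by omega), mul_zero]

/-- Karamata's inequality for a function on `{0, …, n}` with nondecreasing increments `Δ`. -/
theorem MajorizedBy.sum_map_sum_range_le {x y : Multiset ℕ} (h : MajorizedBy x y)
    {Δ : ℕ → ℕ} {n : ℕ} (hΔ : ∀ j, j + 1 < n → Δ j ≤ Δ (j + 1))
    (hx : ∀ m ∈ x, m ≤ n) (hy : ∀ m ∈ y, m ≤ n) :
    (x.map fun m => ∑ j ∈ range m, Δ j).sum ≤ (y.map fun m => ∑ j ∈ range m, Δ j).sum := by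
  have key (z : Multiset ℕ) (hz : ∀ m ∈ z, m ≤ n) : (z.map fun m => ∑ j ∈ range m, Δ j).sum =
      Δ 0 * z.sum +
        ∑ l ∈ range n, (Δ (l + 1) - Δ l) * (z.map (· - (l + 1))).sum := by
    rw [Multiset.map_congr rfl fun m hm => sum_range_eq_sum_tsub hΔ (hz m hm),
      Multiset.sum_map_add, Multiset.sum_map_mul_left, Multiset.map_id', Multiset.sum_map_sum]
    simp only [Multiset.sum_map_mul_left]
  rw [key x hx, key y hy, h.2.1]
  gcongr with l _
  exact h.sum_map_tsub_le (l + 1)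

theorem lt_iff_val_lt_card_filter {n : ℕ} {K : Fin n → ℕ} (hK : Monotone K) (a : ℕ) (j : Fin n) :
    K j < a ↔ (j : ℕ) < #{i | K i < a} := by
  constructor
  · intro h
    have : Iic j ⊆ ({i | K i < a} : Finset (Fin n)) := fun i hi =>
      by simpa using (hK (mem_Iic.mp hi)).trans_lt h
    have := card_le_card this
    rw [Fin.card_Iic] at this
    omega
  · contrapose!
    intro h
    have : ({i | K i < a} : Finset (Fin n)) ⊆ Iio j := fun i hi => by
      rw [mem_Iio]
      by_contra hij
      have := hK (not_lt.mp hij)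
      simp only [mem_filter, mem_univ, true_and] at hi
      omega
    simpa using card_le_card this

/-- The vertices of the cycle can be permuted so that every class of a given coloring attains the
largest Wiener index for its size. -/
theorem exists_perm_wienerSet_eq_maxWiener {n k : ℕ} [NeZero n] (f : ZMod n → Fin k) :
    ∃ π : Equiv.Perm (ZMod n), ∀ i, wienerSet (cycleGraphZMod n) (colorClass (f ∘ π) i) =
      maxWiener n #(colorClass f i) := by
  let key : Fin k → ℕ := fun i => if Even #(colorClass f i) then i else k + i
  have hkey : Function.Injective key := by
    intro a b hab
    simp only [key] at hab
    ext
    split_ifs at hab <;> omega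
  have hbij : Function.Bijective fun j : Fin n => antipodalOrder n j := by
    rw [Fintype.bijective_iff_injective_and_card]
    exact ⟨fun a b hab => Fin.ext (antipodalOrder_injOn n a.2 b.2 hab), by simp [ZMod.card]⟩
  let e : Fin n ≃ ZMod n := Equiv.ofBijective _ hbij
  let σ := Tuple.sort (key ∘ f ∘ e)
  have hmono : Monotone ((key ∘ f ∘ e) ∘ σ) := Tuple.monotone_sort _
  have hcard (p : ℕ → Prop) [DecidablePred p] :
      #{j | p (((key ∘ f ∘ e) ∘ σ) j)} = #{v | p (key (f v))} :=
    card_equiv (σ.trans e) (by simp)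
  refine ⟨(e.symm.trans σ).trans e, fun i => ?_⟩
  have hsplit : #{v | key (f v) < key i} + #(colorClass f i) = #{v | key (f v) < key i + 1} := by
    rw [colorClass, ← card_union_of_disjoint]
    · congr 1
      ext v
      simp only [mem_union, mem_filter, mem_univ, true_and, ← hkey.eq_iff (a := f v)]
      omega
    · rw [disjoint_filter]
      rintro v - h1 rfl
      exact h1.false
  have hle : #{v | key (f v) < key i} + #(colorClass f i) ≤ n := by
    rw [hsplit]
    simpa [ZMod.card] using card_le_univ ({v | key (f v) < key i + 1} : Finset (ZMod n))
  have himage : colorClass (f ∘ (e.symm.trans σ).trans e) i =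
      (Ico #{v | key (f v) < key i} (#{v | key (f v) < key i} + #(colorClass f i))).image
        (antipodalOrder n) := by
    have hmem (j : Fin n) : f (e (σ j)) = i ↔ #{v | key (f v) < key i} ≤ (j : ℕ) ∧
        (j : ℕ) < #{v | key (f v) < key i} + #(colorClass f i) := by
      have h1 := lt_iff_val_lt_card_filter hmono (key i) j
      have h2 := lt_iff_val_lt_card_filter hmono (key i + 1) j
      rw [hcard (· < key i)] at h1
      rw [hcard (· < key i + 1), ← hsplit] at h2
      simp only [Function.comp_apply] at h1 h2
      rw [← hkey.eq_iff]
      omega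
    ext v
    obtain ⟨j, rfl⟩ := e.surjective v
    simp only [colorClass, mem_filter, mem_univ, true_and, Function.comp_apply, mem_image, mem_Ico,
      Equiv.trans_apply, Equiv.symm_apply_apply, hmem]
    constructor
    · exact fun h => ⟨j, h, rfl⟩
    · rintro ⟨l, hl, hlj⟩
      rwa [← antipodalOrder_injOn n (Set.mem_Iio.mpr (hl.2.trans_le hle)) j.2 hlj]
  rw [himage]
  refine wienerSet_image_antipodalOrder hle (Or.inr ?_)
  rw [or_iff_not_imp_left, Nat.not_odd_iff_even]
  intro hi
  rw [card_eq_sum_card_fiberwise (f := f) (t := univ) (by simp)]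
  refine even_sum _ fun c _ => ?_
  rw [filter_filter]
  by_cases hc : key c < key i
  · have : Even #(colorClass f c) := by
      by_contra hodd
      simp only [key, hi, hodd, if_true, if_false] at hc
      omega
    rwa [colorClass, filter_congr fun v _ => show f v = c ↔ key (f v) < key i ∧ f v = c from
      ⟨fun h => ⟨h ▸ hc, h⟩, fun h => h.2⟩] at this
  · rw [filter_false_of_mem]
    · simp
    · rintro v - ⟨h, rfl⟩
      exact hc h

theorem card_colorClass_comp_equiv {V : Type*} [Fintype V] {k : ℕ} (f : V → Fin k)
    (π : Equiv.Perm V) (i : Fin k) : #(colorClass (f ∘ π) i) = #(colorClass f i) :=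
  card_equiv π (by simp [colorClass])

theorem IsWeakMaximizer.wienerColoring_eq {n k : ℕ} [NeZero n] {f : ZMod n → Fin k}
    (hf : IsWeakMaximizer (cycleGraphZMod n) f) :
    wienerColoring (cycleGraphZMod n) f = ((colorType f).map (maxWiener n)).sum := by
  have h : ((colorType f).map (maxWiener n)).sum = ∑ i, maxWiener n #(colorClass f i) := by
    rw [colorType, Multiset.map_map]
    rfl
  rw [h]
  refine le_antisymm (sum_le_sum fun i _ => wienerSet_le_maxWiener n _) ?_
  obtain ⟨π, hπ⟩ := exists_perm_wienerSet_eq_maxWiener f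
  simp only [← hπ]
  refine hf.2 (f ∘ π) (hf.1.comp π.surjective) ?_
  simp only [colorType, card_colorClass_comp_equiv]

theorem le_of_mem_colorType {n k : ℕ} [NeZero n] {f : ZMod n → Fin k} {m : ℕ}
    (hm : m ∈ colorType f) : m ≤ n := by
  obtain ⟨i, -, rfl⟩ := Multiset.mem_map.mp hm
  simpa [ZMod.card] using card_le_univ (colorClass f i)

/-- If `f, g` are `k`-color weak maximizers of `W` on `C_n` and `type(g) ≺ type(f)`,
then `W(g) ≤ W(f)`. -/
theorem cycle_majorization_le (n k : ℕ) [NeZero n] (f g : ZMod n → Fin k)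
    (hf : IsWeakMaximizer (cycleGraphZMod n) f)
    (hg : IsWeakMaximizer (cycleGraphZMod n) g)
    (hmaj : MajorizedBy (colorType g) (colorType f)) :
    wienerColoring (cycleGraphZMod n) g ≤ wienerColoring (cycleGraphZMod n) f := by
  rw [hf.wienerColoring_eq, hg.wienerColoring_eq]
  exact hmaj.sum_map_sum_range_le (fun j hj => wienerIncrement_le_succ hj)
    (fun m hm => le_of_mem_colorType hm) (fun m hm => le_of_mem_colorType hm)
end
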